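/- Let Ω ⊂ X be an arbitrary set. The space of sets A ⊂ Ω with capa_1(A) < ∞, equipped with the distance d(A_1, A_2) := capa_1(A_1 Δ A_2) (where Δ denotes symmetric difference), is a complete metric space, once sets A_1, A_2 with capa_1(A_1 Δ A_2) = 0 are identified. -/

import Mathlib

open MeasureTheory Filter Metric Set
open scoped Topology ENNReal NNReal symmDiff

noncomputable section

namespace PaperBV

/-- A rectifiable curve parametrized by arc-length: a `1`-Lipschitz map on `[0, len]`. -/
structure Curve (X : Type*) [MetricSpace X] where
  len : ℝ
  len_nonneg : 0 ≤ len
  toFun : ℝ → X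
  lip : LipschitzOnWith 1 toFun (Set.Icc 0 len)

variable {X : Type*} [MetricSpace X] [MeasurableSpace X] [BorelSpace X]

/-- The curve lies in the set `A`. -/
def Curve.In (γ : Curve X) (A : Set X) : Prop :=
  ∀ t ∈ Set.Icc (0 : ℝ) γ.len, γ.toFun t ∈ A

/-- The curve integral `∫_γ g ds` of a nonnegative function, for an
arc-length parametrized curve. -/
def Curve.integral (γ : Curve X) (g : X → ℝ≥0∞) : ℝ≥0∞ :=
  ∫⁻ t in Set.Icc (0 : ℝ) γ.len, g (γ.toFun t)

/-- The upper gradient inequality `|u(x) - u(y)| ≤ ∫_γ g ds` along the curve `γ`,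
where `x, y` are the endpoints of `γ`. -/
def UGIneq (u : X → ℝ) (g : X → ℝ≥0∞) (γ : Curve X) : Prop :=
  ENNReal.ofReal |u (γ.toFun 0) - u (γ.toFun γ.len)| ≤ γ.integral g

/-- `g` is an upper gradient of `u` on `X`: `g` is nonnegative (automatic in `ℝ≥0∞`),
Borel, and the upper gradient inequality holds along every curve. -/
def IsUpperGradient (u : X → ℝ) (g : X → ℝ≥0∞) : Prop :=
  Measurable g ∧ ∀ γ : Curve X, UGIneq u g γ

/-- A family of curves has zero `1`-modulus: there is a nonnegative Borel function
`ρ ∈ L¹(X)` whose curve integral is infinite along every curve of the family. -/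
def ZeroMod (μ : Measure X) (Γ : Set (Curve X)) : Prop :=
  ∃ ρ : X → ℝ≥0∞, Measurable ρ ∧ (∫⁻ x, ρ x ∂μ) < ∞ ∧ ∀ γ ∈ Γ, γ.integral ρ = ∞

/-- `g` is a `1`-weak upper gradient of `u` in `A`: `g` is nonnegative, `μ`-measurable,
and the upper gradient inequality holds along `1`-a.e. curve in `A`. -/
def IsWeakUpperGradientOn (μ : Measure X) (u : X → ℝ) (g : X → ℝ≥0∞) (A : Set X) : Prop :=
  AEMeasurable g μ ∧ ZeroMod μ {γ : Curve X | γ.In A ∧ ¬ UGIneq u g γ}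

/-- A nonnegative function `g` belongs to `L¹_loc(A)`. -/
def LIntegrableLocOn (μ : Measure X) (g : X → ℝ≥0∞) (A : Set X) : Prop :=
  ∀ x ∈ A, ∃ r > (0 : ℝ), (∫⁻ y in A ∩ Metric.ball x r, g y ∂μ) < ∞

/-- `g` is the minimal `1`-weak upper gradient of `u` in `A`: a `1`-weak upper gradient
satisfying `g ≤ g'` `μ`-a.e. in `A` for every `1`-weak upper gradient `g' ∈ L¹_loc(A)`. -/
def IsMinimalWUG (μ : Measure X) (u : X → ℝ) (g : X → ℝ≥0∞) (A : Set X) : Prop :=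
  IsWeakUpperGradientOn μ u g A ∧
    ∀ g' : X → ℝ≥0∞, IsWeakUpperGradientOn μ u g' A → LIntegrableLocOn μ g' A →
      ∀ᵐ x ∂(μ.restrict A), g x ≤ g' x

/-- The Newtonian norm `‖u‖_{N^{1,1}(A)}` (valued in `ℝ≥0∞`). -/
def NNorm (μ : Measure X) (A : Set X) (u : X → ℝ) : ℝ≥0∞ :=
  (∫⁻ x in A, ENNReal.ofReal |u x| ∂μ) +
    ⨅ (g : X → ℝ≥0∞) (_ : IsWeakUpperGradientOn μ u g A), ∫⁻ x in A, g x ∂μ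

/-- `u ∈ N^{1,1}(A)`. -/
def MemN11 (μ : Measure X) (A : Set X) (u : X → ℝ) : Prop :=
  NNorm μ A u < ∞

/-- `u ∈ N^{1,1}_loc(A)`: every point of `A` has a ball `B` with `u ∈ N^{1,1}(A ∩ B)`. -/
def MemN11Loc (μ : Measure X) (A : Set X) (u : X → ℝ) : Prop :=
  ∀ x ∈ A, ∃ r > (0 : ℝ), NNorm μ (A ∩ Metric.ball x r) u < ∞

/-- `u ∈ N^{1,1}(Ω')` for every bounded open `Ω' ⊆ X`. -/
def MemN11LocBounded (μ : Measure X) (u : X → ℝ) : Prop :=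
  ∀ Ω' : Set X, IsOpen Ω' → Bornology.IsBounded Ω' → NNorm μ Ω' u < ∞

/-- `u ∈ N^{1,1}_0(Ω)`: `u ∈ N^{1,1}(X)` and `u = 0` outside `Ω`. -/
def MemN110 (μ : Measure X) (Ω : Set X) (u : X → ℝ) : Prop :=
  MemN11 μ Set.univ u ∧ ∀ x ∉ Ω, u x = 0

/-- The `1`-capacity `capa₁(A) = inf {‖u‖_{N^{1,1}(X)} : u ∈ N^{1,1}(X), u ≥ 1 on A}`. -/
def capa1 (μ : Measure X) (A : Set X) : ℝ≥0∞ :=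
  ⨅ (u : X → ℝ) (_ : MemN11 μ Set.univ u) (_ : ∀ x ∈ A, 1 ≤ u x), NNorm μ Set.univ u

/-- `U` is `1`-quasiopen: for every `ε > 0` there is an open `G` with `capa₁(G) < ε`
such that `U ∪ G` is open. -/
def QuasiOpen (μ : Measure X) (U : Set X) : Prop :=
  ∀ ε : ℝ, 0 < ε → ∃ G : Set X, IsOpen G ∧ capa1 μ G < ENNReal.ofReal ε ∧ IsOpen (U ∪ G)

/-- `u ∈ L¹_loc(A)`. -/
def MemL1Loc (μ : Measure X) (A : Set X) (u : X → ℝ) : Prop :=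
  AEMeasurable u (μ.restrict A) ∧
    ∀ x ∈ A, ∃ r > (0 : ℝ), (∫⁻ y in A ∩ Metric.ball x r, ENNReal.ofReal |u y| ∂μ) < ∞

/-- `v i → u` in `L¹_loc(A)`: every `x ∈ A` has a ball `B` with `v i → u` in `L¹(A ∩ B)`. -/
def L1LocConv (μ : Measure X) (A : Set X) (v : ℕ → X → ℝ) (u : X → ℝ) : Prop :=
  ∀ x ∈ A, ∃ r > (0 : ℝ),
    Filter.Tendsto (fun i => ∫⁻ y in A ∩ Metric.ball x r, ENNReal.ofReal |v i y - u y| ∂μ)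
      Filter.atTop (𝓝 0)

/-- `u` is locally Lipschitz on `Ω`. -/
def LocLipOn (u : X → ℝ) (Ω : Set X) : Prop :=
  ∀ x ∈ Ω, ∃ r > (0 : ℝ), ∃ K : ℝ≥0, LipschitzOnWith K u (Ω ∩ Metric.ball x r)

/-- The total variation `‖Du‖(Ω)` of `u` in an open set `Ω`: the infimum of
`liminf_i ∫_Ω g_{v i} dμ` over sequences of locally Lipschitz functions `v i → u`
in `L¹_loc(Ω)`, where `g_{v i}` is the minimal `1`-weak upper gradient of `v i` in `Ω`. -/
def tvOpen (μ : Measure X) (Ω : Set X) (u : X → ℝ) : ℝ≥0∞ :=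
  ⨅ (v : ℕ → X → ℝ) (g : ℕ → X → ℝ≥0∞) (_ : ∀ i, LocLipOn (v i) Ω)
    (_ : ∀ i, IsMinimalWUG μ (v i) (g i) Ω) (_ : L1LocConv μ Ω v u),
    Filter.liminf (fun i => ∫⁻ x in Ω, g i x ∂μ) Filter.atTop

/-- The total variation `‖Du‖(A)` of `u` in an arbitrary set `A`:
`inf {‖Du‖(Ω) : Ω ⊇ A open}`. -/
def tv (μ : Measure X) (A : Set X) (u : X → ℝ) : ℝ≥0∞ :=
  ⨅ (Ω : Set X) (_ : IsOpen Ω) (_ : A ⊆ Ω), tvOpen μ Ω u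

/-- The perimeter `P(E, A) = ‖Dχ_E‖(A)` for arbitrary `A`. -/
def perim (μ : Measure X) (E A : Set X) : ℝ≥0∞ :=
  tv μ A (Set.indicator E (fun _ => (1 : ℝ)))

/-- The perimeter `P(E, Ω) = ‖Dχ_E‖(Ω)` for open `Ω`. -/
def perimOpen (μ : Measure X) (E Ω : Set X) : ℝ≥0∞ :=
  tvOpen μ Ω (Set.indicator E (fun _ => (1 : ℝ)))

/-- The measure `μ` is doubling with constant `Cd`. -/
def Doubling (μ : Measure X) (Cd : ℝ) : Prop :=
  1 ≤ Cd ∧ ∀ (x : X) (r : ℝ), 0 < r →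
    0 < μ (Metric.ball x (2 * r)) ∧
      μ (Metric.ball x (2 * r)) ≤ ENNReal.ofReal Cd * μ (Metric.ball x r) ∧
      μ (Metric.ball x r) < ∞

/-- The space supports a `(1,1)`-Poincaré inequality with constants `CP, lam`. -/
def Poincare (μ : Measure X) (CP lam : ℝ) : Prop :=
  1 ≤ CP ∧ 1 ≤ lam ∧ ∀ (x : X) (r : ℝ), 0 < r → ∀ (u : X → ℝ) (g : X → ℝ≥0∞),
    MemL1Loc μ Set.univ u → IsUpperGradient u g →
      ENNReal.ofReal (⨍ y in Metric.ball x r, |u y - ⨍ z in Metric.ball x r, u z ∂μ| ∂μ)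
        ≤ ENNReal.ofReal (CP * r) *
            ((∫⁻ y in Metric.ball x (lam * r), g y ∂μ) / μ (Metric.ball x (lam * r)))

/-- The restricted spherical Hausdorff content of codimension one. -/
def HR (μ : Measure X) (R : ℝ) (A : Set X) : ℝ≥0∞ :=
  ⨅ (c : ℕ → X) (r : ℕ → ℝ) (_ : ∀ i, 0 < r i ∧ r i ≤ R)
    (_ : A ⊆ ⋃ i, Metric.ball (c i) (r i)),
    ∑' i, μ (Metric.ball (c i) (r i)) / ENNReal.ofReal (r i)

/-- The codimension-one Hausdorff measure `H(A) = lim_{R → 0} H_R(A)`. -/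
def Hcodim (μ : Measure X) (A : Set X) : ℝ≥0∞ :=
  ⨆ (R : ℝ) (_ : 0 < R), HR μ R A

/-- The lower approximate limit `u^∧`. -/
def lowerApprox (μ : Measure X) (u : X → ℝ) (x : X) : EReal :=
  sSup ((fun t : ℝ => (t : EReal)) ''
    {t : ℝ | Filter.Tendsto
      (fun r => μ (Metric.ball x r ∩ {y | u y < t}) / μ (Metric.ball x r))
      (𝓝[>] (0 : ℝ)) (𝓝 0)})

/-- The upper approximate limit `u^∨`. -/
def upperApprox (μ : Measure X) (u : X → ℝ) (x : X) : EReal :=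
  sInf ((fun t : ℝ => (t : EReal)) ''
    {t : ℝ | Filter.Tendsto
      (fun r => μ (Metric.ball x r ∩ {y | t < u y}) / μ (Metric.ball x r))
      (𝓝[>] (0 : ℝ)) (𝓝 0)})

/-- `u ∈ BV_loc(X)`: `u ∈ L¹_loc(X)` with `‖Du‖(Ω') < ∞` for every bounded open `Ω'`. -/
def MemBVLoc (μ : Measure X) (u : X → ℝ) : Prop :=
  MemL1Loc μ Set.univ u ∧
    ∀ Ω' : Set X, IsOpen Ω' → Bornology.IsBounded Ω' → tvOpen μ Ω' u < ∞

/-- The measure-theoretic interior `I_E`. -/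
def mInterior (μ : Measure X) (E : Set X) : Set X :=
  {x | Filter.Tendsto (fun r => μ (Metric.ball x r \ E) / μ (Metric.ball x r))
    (𝓝[>] (0 : ℝ)) (𝓝 0)}

/-- The measure-theoretic exterior `O_E`. -/
def mExterior (μ : Measure X) (E : Set X) : Set X :=
  {x | Filter.Tendsto (fun r => μ (Metric.ball x r ∩ E) / μ (Metric.ball x r))
    (𝓝[>] (0 : ℝ)) (𝓝 0)}

/-- The measure-theoretic boundary `∂*E`: the points where both `E` and its complement
have positive upper density. -/
def mBoundary (μ : Measure X) (E : Set X) : Set X :=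
  {x | 0 < Filter.limsup (fun r => μ (Metric.ball x r ∩ E) / μ (Metric.ball x r))
        (𝓝[>] (0 : ℝ)) ∧
       0 < Filter.limsup (fun r => μ (Metric.ball x r \ E) / μ (Metric.ball x r))
        (𝓝[>] (0 : ℝ))}


section Aux

open MeasureTheory Filter Metric Set
open scoped Topology ENNReal NNReal symmDiff
set_option linter.unusedSectionVars false


lemma Doubling.pos {μ : Measure X} {Cd : ℝ} (h : Doubling μ Cd) (x : X) {r : ℝ} (hr : 0 < r) :
    0 < μ (ball x r) := by
  have := (h.2 x (r / 2) (by positivity)).1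
  rwa [show 2 * (r / 2) = r by ring] at this

lemma Doubling.lt_top {μ : Measure X} {Cd : ℝ} (h : Doubling μ Cd) (x : X) (r : ℝ) :
    μ (ball x r) < ∞ := by
  by_cases hr : 0 < r
  · exact (h.2 x r hr).2.2
  · rw [ball_eq_empty.2 (not_lt.1 hr)]; simp

lemma Doubling.two {μ : Measure X} {Cd : ℝ} (h : Doubling μ Cd) (x : X) {r : ℝ} (hr : 0 < r) :
    μ (ball x (2 * r)) ≤ ENNReal.ofReal Cd * μ (ball x r) := (h.2 x r hr).2.1

lemma Doubling.pow {μ : Measure X} {Cd : ℝ} (h : Doubling μ Cd) (x : X) {r : ℝ} (hr : 0 < r)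
    (k : ℕ) : μ (ball x (2 ^ k * r)) ≤ ENNReal.ofReal Cd ^ k * μ (ball x r) := by
  induction k with
  | zero => simp
  | succ k ih =>
    rw [pow_succ' (2 : ℝ), mul_assoc]
    refine (h.two x (by positivity)).trans ?_
    rw [pow_succ', mul_assoc]
    gcongr

lemma Doubling.proper [CompleteSpace X] {μ : Measure X} {Cd : ℝ} (h : Doubling μ Cd) :
    ProperSpace X := by
  refine ⟨fun x R => ?_⟩
  refine TotallyBounded.isCompact_of_isClosed ?_ isClosed_closedBall
  rw [Metric.totallyBounded_iff]
  intro ε hε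
  by_contra hcon
  push Not at hcon
  have : ∃ u : ℕ → X, ∀ n, u n ∈ closedBall x R ∧ ∀ m < n, ε ≤ dist (u n) (u m) := by
    obtain ⟨u, hu⟩ := seq_of_forall_finite_exists (P := fun (y : X) (t : Set X) => y ∈ closedBall x R ∧
      ∀ z ∈ t, ε ≤ dist y z) (by
        intro t ht
        obtain ⟨y, hy, hy2⟩ := not_subset.1 (hcon t ht)
        refine ⟨y, hy, fun z hz => ?_⟩
        simp only [mem_iUnion, not_exists, mem_ball, not_lt] at hy2
        exact hy2 z hz)
    refine ⟨u, fun n => ⟨(hu n).1, fun m hm => (hu n).2 _ ⟨m, hm, rfl⟩⟩⟩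
  obtain ⟨u, hu⟩ := this
  have hdisj : Pairwise (Function.onFun Disjoint fun n => ball (u n) (ε / 2)) := by
    have key : ∀ m n, m < n → Disjoint (ball (u n) (ε / 2)) (ball (u m) (ε / 2)) := by
      intro m n hmn
      apply ball_disjoint_ball
      have := (hu n).2 m hmn
      linarith
    intro m n hmn
    rcases lt_or_gt_of_ne hmn with h1 | h1
    · exact (key m n h1).symm
    · exact key n m h1
  have hR : 0 ≤ R := by
    have := (hu 0).1
    rw [mem_closedBall] at this
    exact dist_nonneg.trans this
  obtain ⟨k, hk⟩ := pow_unbounded_of_one_lt ((2 * R + 1) / (ε / 2)) (one_lt_two (α := ℝ))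
  rw [div_lt_iff₀ (by positivity)] at hk
  have hlow : ∀ n, μ (ball x 1) ≤ ENNReal.ofReal Cd ^ k * μ (ball (u n) (ε / 2)) := by
    intro n
    refine le_trans (measure_mono ?_) (h.pow (u n) (by positivity) k)
    apply ball_subset_ball'
    have := (hu n).1
    rw [mem_closedBall, dist_comm] at this
    linarith
  have hsum : ∑' n : ℕ, μ (ball (u n) (ε / 2)) < ∞ := by
    rw [← measure_iUnion hdisj (fun n => measurableSet_ball)]
    refine lt_of_le_of_lt (measure_mono ?_) (h.lt_top x (R + ε))
    refine iUnion_subset fun n => ball_subset_ball' ?_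
    have := (hu n).1
    rw [mem_closedBall] at this
    linarith
  have : ∑' n : ℕ, μ (ball x 1) < ∞ := by
    refine lt_of_le_of_lt (ENNReal.tsum_le_tsum hlow) ?_
    rw [ENNReal.tsum_mul_left]
    exact ENNReal.mul_lt_top (ENNReal.pow_lt_top ENNReal.ofReal_lt_top) hsum
  rw [ENNReal.tsum_const_eq_top_of_ne_zero (h.pos x one_pos).ne'] at this
  exact lt_irrefl _ this

lemma Doubling.locFin {μ : Measure X} {Cd : ℝ} (h : Doubling μ Cd) :
    IsLocallyFiniteMeasure μ :=
  ⟨fun x => ⟨ball x 1, ball_mem_nhds x one_pos, h.lt_top x 1⟩⟩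

lemma Doubling.unif {μ : Measure X} {Cd : ℝ} (h : Doubling μ Cd) :
    IsUnifLocDoublingMeasure μ := by
  refine ⟨⟨Cd.toNNReal ^ 2, ?_⟩⟩
  filter_upwards [self_mem_nhdsWithin] with ε hε x
  have hε : 0 < ε := hε
  calc μ (closedBall x (2 * ε)) ≤ μ (ball x (2 ^ 2 * ε)) :=
        measure_mono (closedBall_subset_ball (by linarith))
    _ ≤ ENNReal.ofReal Cd ^ 2 * μ (ball x ε) := h.pow x hε 2
    _ ≤ _ := by
      push_cast
      exact mul_le_mul_right (measure_mono ball_subset_closedBall) _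

/-- Maximal function. -/
def MF (μ : Measure X) (g : X → ℝ≥0∞) (x : X) : ℝ≥0∞ :=
  ⨆ (r : ℝ) (_ : 0 < r), (∫⁻ y in ball x r, g y ∂μ) / μ (ball x r)

lemma le_MF (μ : Measure X) (g : X → ℝ≥0∞) (x : X) {r : ℝ} (hr : 0 < r) :
    (∫⁻ y in ball x r, g y ∂μ) / μ (ball x r) ≤ MF μ g x :=
  le_iSup₂ (f := fun r (_ : 0 < r) => (∫⁻ y in ball x r, g y ∂μ) / μ (ball x r)) r hr

lemma MF_ae_lt_top [CompleteSpace X] {μ : Measure X} {Cd : ℝ} (h : Doubling μ Cd)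
    {g : X → ℝ≥0∞} (hg : Measurable g) (hfin : ∫⁻ x, g x ∂μ ≠ ∞) :
    ∀ᵐ x ∂μ, MF μ (fun y => g y + 1) x < ∞ := by
  have := h.proper
  have := h.locFin
  have := h.unif
  filter_upwards [(IsUnifLocDoublingMeasure.vitaliFamily μ 1).ae_tendsto_lintegral_div
    hg.aemeasurable hfin, ae_lt_top hg hfin] with x hx hgx
  have ht : Tendsto (fun r : ℝ => (∫⁻ y in closedBall x r, g y ∂μ) / μ (closedBall x r))
      (𝓝[>] 0) (𝓝 (g x)) := by
    refine hx.comp (IsUnifLocDoublingMeasure.tendsto_closedBall_filterAt μ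
      (fun _ => x) (fun r => r) tendsto_id ?_)
    filter_upwards [self_mem_nhdsWithin] with r hr
    have hr : 0 < r := hr
    simp [hr.le]
  have h1 : ∀ᶠ r in 𝓝[>] (0 : ℝ),
      (∫⁻ y in closedBall x r, g y ∂μ) / μ (closedBall x r) < g x + 1 :=
    ht.eventually_lt_const (ENNReal.lt_add_right hgx.ne one_ne_zero)
  obtain ⟨r0, hr0, hr0'⟩ := mem_nhdsGT_iff_exists_Ioo_subset.1 h1
  have hr0 : 0 < r0 := hr0
  have hb : ∀ r, 0 < r → (∫⁻ y in ball x r, (g y + 1) ∂μ) / μ (ball x r) ≤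
      max (ENNReal.ofReal Cd * (g x + 1)) ((∫⁻ x, g x ∂μ) / μ (ball x r0)) + 1 := by
    intro r hr
    rw [lintegral_add_right _ measurable_const, ENNReal.add_div]
    refine add_le_add ?_ ?_
    · by_cases hrr : r < r0
      · refine le_trans ?_ (le_max_left _ _)
        have h2 : (∫⁻ y in closedBall x r, g y ∂μ) / μ (closedBall x r) < g x + 1 :=
          hr0' ⟨hr, hrr⟩
        have hcb : μ (closedBall x r) ≤ ENNReal.ofReal Cd * μ (ball x r) :=
          (measure_mono (closedBall_subset_ball (by linarith))).trans (h.two x hr)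
        have hcb0 : μ (closedBall x r) ≠ 0 :=
          ((h.pos x hr).trans_le (measure_mono ball_subset_closedBall)).ne'
        have hcbt : μ (closedBall x r) ≠ ∞ :=
          ((measure_mono (closedBall_subset_ball (by linarith : r < 2 * r))).trans_lt
            (h.lt_top x (2 * r))).ne
        rw [ENNReal.div_lt_iff (Or.inl hcb0) (Or.inl hcbt)] at h2
        refine ENNReal.div_le_of_le_mul ?_
        calc ∫⁻ y in ball x r, g y ∂μ ≤ ∫⁻ y in closedBall x r, g y ∂μ :=
              lintegral_mono_set ball_subset_closedBall
          _ ≤ (g x + 1) * μ (closedBall x r) := h2.le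
          _ ≤ (g x + 1) * (ENNReal.ofReal Cd * μ (ball x r)) := by gcongr
          _ = _ := by ring
      · refine le_trans ?_ (le_max_right _ _)
        refine ENNReal.div_le_div (setLIntegral_le_lintegral _ _) ?_
        exact measure_mono (ball_subset_ball (not_lt.1 hrr))
    · simp [ENNReal.div_self_le_one]
  refine lt_of_le_of_lt (iSup₂_le hb) ?_
  refine ENNReal.add_lt_top.2 ⟨max_lt ?_ ?_, ENNReal.one_lt_top⟩
  · exact ENNReal.mul_lt_top ENNReal.ofReal_lt_top (ENNReal.add_lt_top.2 ⟨hgx, ENNReal.one_lt_top⟩)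
  · exact ENNReal.div_lt_top hfin (h.pos x hr0).ne'


/-- `ε`-coarse curves from `x` to `y`. -/
def EC (ε : ℝ) (x y : X) (S : ℝ) (f : ℝ → X) : Prop :=
  0 ≤ S ∧ Measurable f ∧ f 0 = x ∧ (∀ t, S ≤ t → f t = y) ∧
    ∀ s t, 0 ≤ s → s ≤ t → dist (f s) (f t) ≤ (t - s) + ε

/-- Coarse `g`-weighted distance. -/
def hE (g : X → ℝ≥0∞) (ε : ℝ) (x y : X) : ℝ≥0∞ :=
  ⨅ (S : ℝ) (f : ℝ → X) (_ : EC ε x y S f), ∫⁻ t in Ico 0 S, g (f t)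

lemma hE_le {g : X → ℝ≥0∞} {ε : ℝ} {x y : X} {S : ℝ} {f : ℝ → X} (h : EC ε x y S f) :
    hE g ε x y ≤ ∫⁻ t in Ico 0 S, g (f t) :=
  iInf_le_of_le S (iInf_le_of_le f (iInf_le_of_le h le_rfl))

lemma hE_self {g : X → ℝ≥0∞} {ε : ℝ} (hε : 0 ≤ ε) (x : X) : hE g ε x x = 0 := by
  have : EC ε x x 0 (fun _ => x) :=
    ⟨le_rfl, measurable_const, rfl, fun _ _ => rfl, fun s t _ hst => by simp; linarith⟩
  refine le_antisymm ((hE_le this).trans ?_) zero_le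
  simp

lemma hE_append {g : X → ℝ≥0∞} (hg : Measurable g) {ε : ℝ} (hε : 0 ≤ ε) {x y z : X} {T : ℝ}
    {p : ℝ → X} (hT : 0 ≤ T) (hp : Measurable p) (hp0 : p 0 = y) (hpT : ∀ t, T ≤ t → p t = z)
    (hpd : ∀ s t, 0 ≤ s → s ≤ t → dist (p s) (p t) ≤ (t - s) + ε)
    (hpy : ∀ t, 0 ≤ t → dist y (p t) ≤ t) :
    hE g ε x z ≤ hE g ε x y + ∫⁻ t in Ico 0 T, g (p t) := by
  rw [hE, hE]
  simp only [ENNReal.iInf_add]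
  refine le_iInf fun S => le_iInf fun f => le_iInf fun hf => ?_
  obtain ⟨hS, hfm, hf0, hfS, hfd⟩ := hf
  have hEC : EC ε x z (S + T) (fun s => if s < S then f s else p (s - S)) := by
    refine ⟨by positivity, ?_, ?_, ?_, ?_⟩
    · exact Measurable.ite measurableSet_Iio hfm (hp.comp (measurable_id.sub_const S))
    · by_cases h : (0 : ℝ) < S
      · simp [h, hf0]
      · have : S = 0 := le_antisymm (not_lt.1 h) hS
        subst this
        simp [hp0, ← hf0, hfS 0 le_rfl]
    · intro t ht
      have : ¬ t < S := by linarith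
      simp only [this, if_false]
      exact hpT _ (by linarith)
    · intro s t hs hst
      by_cases h1 : t < S
      · have h2 : s < S := by linarith
        simp only [h1, h2, if_true]
        exact hfd s t hs hst
      · by_cases h2 : s < S
        · simp only [h1, h2, if_true, if_false]
          have a := hfd s S hs h2.le
          rw [hfS S le_rfl] at a
          have b := hpy (t - S) (by linarith)
          have := dist_triangle (f s) y (p (t - S))
          linarith
        · simp only [h1, h2, if_false]
          have := hpd (s - S) (t - S) (by linarith) (by linarith)
          linarith
  refine (hE_le hEC).trans ?_
  have e1 : ∫⁻ t in Ico 0 T, g (p t) =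
      ∫⁻ t, (Ico 0 T).indicator (fun t => g (p t)) (t - S) := by
    rw [lintegral_sub_right_eq_self (fun t => (Ico 0 T).indicator (fun t => g (p t)) t) S,
      lintegral_indicator measurableSet_Ico]
  rw [e1, ← lintegral_indicator measurableSet_Ico, ← lintegral_indicator measurableSet_Ico,
    ← lintegral_add_left (Measurable.indicator (f := fun t => g (f t)) (hg.comp hfm) measurableSet_Ico)]
  refine lintegral_mono fun t => ?_
  by_cases ht : t ∈ Ico 0 (S + T)
  · rw [indicator_of_mem ht]
    by_cases h1 : t < S
    · rw [indicator_of_mem (show t ∈ Ico 0 S from ⟨ht.1, h1⟩)]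
      simp [h1]
    · rw [indicator_of_mem (show t - S ∈ Ico 0 T from ⟨by linarith, by linarith [ht.2]⟩)]
      simp [h1]
  · rw [indicator_of_notMem ht]; exact zero_le

lemma hE_jump {g : X → ℝ≥0∞} (hg : Measurable g) {ε : ℝ} (hε : 0 ≤ ε) {N : ℝ≥0∞}
    (hN : ∀ x, g x ≤ N) {x y z : X} (hd : dist y z ≤ ε) :
    hE g ε x z ≤ hE g ε x y + N * ENNReal.ofReal (dist y z) := by
  refine (hE_append hg hε (T := dist y z) (y := y) (p := fun t => if t < dist y z then y else z)
    dist_nonneg ?_ ?_ ?_ ?_ ?_).trans ?_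
  · exact Measurable.ite measurableSet_Iio measurable_const measurable_const
  · by_cases h : 0 < dist y z
    · simp only [h, if_true]
    · have := dist_eq_zero.1 (le_antisymm (not_lt.1 h) dist_nonneg)
      simp [this]
  · intro t ht
    simp [not_lt.2 ht]
  · intro s t hs hst
    by_cases h1 : t < dist y z
    · have h2 : s < dist y z := by linarith
      simp only [h1, h2, if_true, dist_self]; linarith
    · by_cases h2 : s < dist y z
      · simp only [h1, h2, if_true, if_false]; linarith
      · simp only [h1, h2, if_false, dist_self]; linarith
  · intro t ht
    by_cases h1 : t < dist y z
    · simp only [h1, if_true, dist_self]; exact ht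
    · simp only [h1, if_false]; linarith
  · gcongr
    calc _ ≤ ∫⁻ t in Ico 0 (dist y z), N := lintegral_mono fun t => hN _
      _ = _ := by simp

lemma Curve.lip_le (γ : Curve X) {s t : ℝ} (hs : 0 ≤ s) (hst : s ≤ t) (ht : t ≤ γ.len) :
    dist (γ.toFun s) (γ.toFun t) ≤ t - s := by
  have := γ.lip.dist_le_mul s ⟨hs, hst.trans ht⟩ t ⟨hs.trans hst, ht⟩
  rw [Real.dist_eq, abs_sub_comm, abs_of_nonneg (by linarith)] at this
  simpa using this

lemma hE_curve {g : X → ℝ≥0∞} (hg : Measurable g) {ε : ℝ} (hε : 0 ≤ ε) {x : X} (γ : Curve X) :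
    hE g ε x (γ.toFun γ.len) ≤ hE g ε x (γ.toFun 0) + γ.integral g := by
  have hl := γ.len_nonneg
  have hc : Continuous (fun t : ℝ => γ.toFun (max 0 (min t γ.len))) := by
    refine γ.lip.continuousOn.comp_continuous (by fun_prop) fun t => ⟨le_max_left _ _, ?_⟩
    exact max_le hl (min_le_right _ _)
  refine (hE_append hg hε (T := γ.len) (y := γ.toFun 0) (p := fun t => γ.toFun (max 0 (min t γ.len)))
    hl hc.measurable ?_ ?_ ?_ ?_).trans ?_
  · simp [hl]
  · intro t ht; simp [ht, hl]
  · intro s t hs hst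
    refine (γ.lip_le (le_max_left _ _) ?_ (max_le hl (min_le_right _ _))).trans ?_
    · gcongr
    · have : 0 ≤ min s γ.len := le_min hs hl
      have h3 : 0 ≤ min t γ.len := le_min (hs.trans hst) hl
      rw [max_eq_right this, max_eq_right h3]
      rcases min_cases s γ.len with h | h <;> rcases min_cases t γ.len with h' | h' <;> linarith
  · intro t ht
    refine (γ.lip_le le_rfl (le_max_left _ _) (max_le hl (min_le_right _ _))).trans ?_
    rw [max_eq_right (le_min ht hl)]
    have := min_le_left t γ.len
    linarith
  · gcongr
    rw [Curve.integral]
    calc _ = ∫⁻ t in Ico 0 γ.len, g (γ.toFun t) := by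
            refine setLIntegral_congr_fun measurableSet_Ico fun t ht => ?_
            simp [ht.1, ht.2.le]
      _ ≤ _ := lintegral_mono_set Ico_subset_Icc_self

/-- The reversed curve. -/
def Curve.rev (γ : Curve X) : Curve X where
  len := γ.len
  len_nonneg := γ.len_nonneg
  toFun := fun t => γ.toFun (γ.len - t)
  lip := by
    have h : LipschitzOnWith 1 (fun t : ℝ => γ.len - t) (Icc 0 γ.len) := by
      refine LipschitzOnWith.of_dist_le_mul fun s _ t _ => ?_
      rw [dist_sub_left]; simp
    have := γ.lip.comp h (fun t ht => ⟨by linarith [ht.2], by linarith [ht.1]⟩)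
    rw [one_mul] at this
    exact this

lemma Curve.rev_integral (γ : Curve X) (g : X → ℝ≥0∞) : γ.rev.integral g = γ.integral g := by
  rw [Curve.integral, Curve.integral, ← lintegral_indicator measurableSet_Icc,
    ← lintegral_indicator measurableSet_Icc]
  rw [← lintegral_sub_left_eq_self (fun t => (Icc 0 γ.len).indicator (fun t => g (γ.toFun t)) t)
    γ.len]
  refine lintegral_congr fun t => ?_
  by_cases ht : t ∈ Icc 0 γ.len
  · rw [indicator_of_mem (show t ∈ Icc 0 γ.rev.len from ht), indicator_of_mem]
    · rfl
    · exact ⟨by linarith [ht.2], by linarith [ht.1]⟩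
  · rw [indicator_of_notMem (show t ∉ Icc 0 γ.rev.len from ht), indicator_of_notMem]
    exact fun h => ht ⟨by linarith [h.2], by linarith [h.1]⟩

lemma trunc_sub_le {a b c : ℝ≥0∞} {K : ℝ} (hK : 0 ≤ K) (h : a ≤ b + c) :
    ENNReal.ofReal ((min a (ENNReal.ofReal K)).toReal - (min b (ENNReal.ofReal K)).toReal) ≤ c := by
  have ha : min a (ENNReal.ofReal K) ≠ ∞ := (min_le_right _ _).trans_lt ENNReal.ofReal_lt_top |>.ne
  have hb : min b (ENNReal.ofReal K) ≠ ∞ := (min_le_right _ _).trans_lt ENNReal.ofReal_lt_top |>.ne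
  rw [ENNReal.ofReal_sub _ ENNReal.toReal_nonneg, ENNReal.ofReal_toReal ha,
    ENNReal.ofReal_toReal hb, tsub_le_iff_left]
  rcases le_total b (ENNReal.ofReal K) with hh | hh
  · rw [min_eq_left hh]; exact (min_le_left _ _).trans h
  · rw [min_eq_right hh]; exact (min_le_right _ _).trans le_self_add

/-- Truncated coarse distance. -/
def uE (g : X → ℝ≥0∞) (ε K : ℝ) (x y : X) : ℝ := (min (hE g ε x y) (ENNReal.ofReal K)).toReal

lemma uE_ug {g : X → ℝ≥0∞} (hg : Measurable g) {ε : ℝ} (hε : 0 ≤ ε) {K : ℝ} (hK : 0 ≤ K) (x : X) :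
    IsUpperGradient (uE g ε K x) g := by
  refine ⟨hg, fun γ => ?_⟩
  rw [UGIneq]
  rcases abs_cases (uE g ε K x (γ.toFun 0) - uE g ε K x (γ.toFun γ.len)) with ⟨h, _⟩ | ⟨h, _⟩
  · rw [h]
    have := hE_curve (x := x) hg hε γ.rev
    rw [Curve.rev_integral] at this
    simp only [Curve.rev, sub_self, sub_zero] at this
    exact trunc_sub_le hK this
  · rw [h, neg_sub]
    exact trunc_sub_le hK (hE_curve hg hε γ)

lemma uE_cont {g : X → ℝ≥0∞} (hg : Measurable g) {ε : ℝ} (hε : 0 < ε) {K : ℝ} (hK : 0 ≤ K) (x : X)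
    {N : ℝ≥0} (hN : ∀ x, g x ≤ N) : Continuous (uE g ε K x) := by
  rw [Metric.continuous_iff]
  intro y δ hδ
  have key : ∀ y z, dist y z ≤ ε → uE g ε K x z - uE g ε K x y ≤ N * dist y z := by
    intro y z hd
    have := trunc_sub_le hK (hE_jump (x := x) hg hε.le hN hd)
    rw [← ENNReal.ofReal_coe_nnreal, ← ENNReal.ofReal_mul N.coe_nonneg] at this
    exact (ENNReal.ofReal_le_ofReal_iff (mul_nonneg N.coe_nonneg dist_nonneg)).1 this
  refine ⟨min ε (δ / (N + 1)), by positivity, fun z hz => ?_⟩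
  have h1 := key y z (by rw [dist_comm]; exact (hz.le.trans (min_le_left _ _)))
  have h2 := key z y (hz.le.trans (min_le_left _ _))
  rw [dist_comm] at h1
  have h3 : dist z y < δ / (N + 1) := hz.trans_le (min_le_right _ _)
  rw [lt_div_iff₀ (by positivity)] at h3
  have : 0 ≤ dist z y := dist_nonneg
  rw [Real.dist_eq, abs_lt]
  constructor <;> nlinarith

lemma uE_nonneg (g : X → ℝ≥0∞) (ε K : ℝ) (x y : X) : 0 ≤ uE g ε K x y := ENNReal.toReal_nonneg

lemma uE_le (g : X → ℝ≥0∞) (ε : ℝ) {K : ℝ} (hK : 0 ≤ K) (x y : X) : uE g ε K x y ≤ K :=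
  ENNReal.toReal_le_of_le_ofReal hK (min_le_right _ _)

lemma uE_self (g : X → ℝ≥0∞) {ε : ℝ} (hε : 0 ≤ ε) (K : ℝ) (x : X) : uE g ε K x x = 0 := by
  simp [uE, hE_self hε]


lemma avg_sub_le {μ : Measure X} {B : Set X} (h0 : μ B ≠ 0) (ht : μ B ≠ ∞) {u : X → ℝ}
    (hu : IntegrableOn u B μ) (c : ℝ) :
    |(⨍ y in B, u y ∂μ) - c| ≤ (μ.real B)⁻¹ * ∫ y in B, |u y - c| ∂μ := by
  have hc : IntegrableOn (fun _ : X => c) B μ := integrableOn_const ht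
  have hp : 0 < μ.real B := ENNReal.toReal_pos h0 ht
  have : (⨍ y in B, u y ∂μ) - c = (μ.real B)⁻¹ * ∫ y in B, (u y - c) ∂μ := by
    rw [integral_sub hu hc, setAverage_eq, setIntegral_const, smul_eq_mul, smul_eq_mul]
    field_simp
  rw [this, abs_mul, abs_of_pos (inv_pos.2 hp)]
  gcongr
  exact abs_integral_le_integral_abs

lemma bdd_intOn {μ : Measure X} {B : Set X} (ht : μ B ≠ ∞) {u : X → ℝ}
    (hu : Continuous u) {K : ℝ} (hK : ∀ x, |u x| ≤ K) : IntegrableOn u B μ := by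
  refine Measure.integrableOn_of_bounded (M := K) ht hu.measurable.aestronglyMeasurable ?_
  exact ae_of_all _ hK

lemma ball_avg {μ : Measure X} {Cd CP lam : ℝ} (hD : Doubling μ Cd) (hP : Poincare μ CP lam)
    {u : X → ℝ} {g G : X → ℝ≥0∞} (hu : Continuous u) {K : ℝ} (hK : ∀ x, |u x| ≤ K)
    (hug : IsUpperGradient u g) (hgG : ∀ x, g x ≤ G x) {x : X} {m : ℝ} (hm0 : 0 ≤ m)
    (hm : MF μ G x ≤ ENNReal.ofReal m) {z : X} {r r' c : ℝ} (hr : 0 < r) (hr' : 0 < r')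
    (hc : 0 ≤ c) (hsub : ball z r' ⊆ ball x r)
    (hmu : μ (ball x r) ≤ ENNReal.ofReal c * μ (ball z r')) :
    |(⨍ y in ball z r', u y ∂μ) - ⨍ y in ball x r, u y ∂μ| ≤ c * (CP * r * m) := by
  set a := ⨍ y in ball x r, u y ∂μ with ha
  obtain ⟨hCP, hlam, hP⟩ := hP
  have hCP0 : 0 ≤ CP * r := by positivity
  have hL1 : MemL1Loc μ univ u := by
    refine ⟨hu.measurable.aemeasurable, fun y _ => ⟨1, one_pos, ?_⟩⟩
    calc _ ≤ ∫⁻ y in univ ∩ ball y 1, ENNReal.ofReal K ∂μ :=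
          lintegral_mono fun y => ENNReal.ofReal_le_ofReal (hK y)
      _ < ∞ := by
        rw [setLIntegral_const, univ_inter]
        exact ENNReal.mul_lt_top ENNReal.ofReal_lt_top (hD.lt_top _ _)
  have h1 := hP x r hr u g hL1 hug
  rw [← ha] at h1
  have hlr : 0 < lam * r := by positivity
  have h2 : (⨍ y in ball x r, |u y - a| ∂μ) ≤ CP * r * m := by
    have : ENNReal.ofReal (⨍ y in ball x r, |u y - a| ∂μ) ≤ ENNReal.ofReal (CP * r * m) := by
      rw [ENNReal.ofReal_mul hCP0]
      refine h1.trans ?_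
      gcongr
      refine le_trans ?_ ((le_MF μ G x hlr).trans hm)
      gcongr
      exact hgG _
    exact (ENNReal.ofReal_le_ofReal_iff (by positivity)).1 this
  have hzt := (hD.lt_top z r').ne
  have hxt := (hD.lt_top x r).ne
  have hz0 : 0 < μ.real (ball z r') := ENNReal.toReal_pos (hD.pos z hr').ne' hzt
  have hx0 : 0 < μ.real (ball x r) := ENNReal.toReal_pos (hD.pos x hr).ne' hxt
  have hreal : μ.real (ball x r) ≤ c * μ.real (ball z r') := by
    have := ENNReal.toReal_mono (by finiteness) hmu
    rwa [ENNReal.toReal_mul, ENNReal.toReal_ofReal hc] at this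
  have hint : IntegrableOn (fun y => |u y - a|) (ball x r) μ :=
    ((bdd_intOn hxt hu hK).sub (integrableOn_const hxt)).abs
  refine (avg_sub_le (hD.pos z hr').ne' hzt (bdd_intOn hzt hu hK) a).trans ?_
  have h3 : ∫ y in ball z r', |u y - a| ∂μ ≤ ∫ y in ball x r, |u y - a| ∂μ :=
    setIntegral_mono_set hint (ae_of_all _ fun y => abs_nonneg _) hsub.eventuallyLE
  rw [setAverage_eq, smul_eq_mul] at h2
  have hI : 0 ≤ ∫ y in ball x r, |u y - a| ∂μ := integral_nonneg fun y => abs_nonneg _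
  have h4 : ∫ y in ball x r, |u y - a| ∂μ ≤ μ.real (ball x r) * (CP * r * m) := by
    rwa [inv_mul_le_iff₀ hx0] at h2
  rw [inv_mul_le_iff₀ hz0]
  have h5 : μ.real (ball x r) * (CP * r * m) ≤ c * μ.real (ball z r') * (CP * r * m) :=
    mul_le_mul_of_nonneg_right hreal (by positivity)
  linarith

lemma tele {μ : Measure X} {Cd CP lam : ℝ} (hD : Doubling μ Cd) (hP : Poincare μ CP lam)
    {u : X → ℝ} {g G : X → ℝ≥0∞} (hu : Continuous u) {K : ℝ} (hK : ∀ x, |u x| ≤ K)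
    (hug : IsUpperGradient u g) (hgG : ∀ x, g x ≤ G x) {x : X} {m : ℝ} (hm0 : 0 ≤ m)
    (hm : MF μ G x ≤ ENNReal.ofReal m) {r : ℝ} (hr : 0 < r) :
    |u x - ⨍ y in ball x r, u y ∂μ| ≤ 2 * (Cd * (CP * r * m)) := by
  have hCd : 0 ≤ Cd := by linarith [hD.1]
  have hCP : 0 ≤ CP := by linarith [hP.1]
  set D := Cd * (CP * r * m) with hDdef
  have hD0 : 0 ≤ D := by positivity
  set a : ℕ → ℝ := fun k => ⨍ y in ball x (r * (1 / 2) ^ k), u y ∂μ with ha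
  have hstep : ∀ k, |a (k + 1) - a k| ≤ D * (1 / 2) ^ k := by
    intro k
    have hrk : 0 < r * (1 / 2) ^ k := by positivity
    have hrk' : 0 < r * (1 / 2) ^ (k + 1) := by positivity
    have e : r * (1 / 2) ^ k = 2 * (r * (1 / 2) ^ (k + 1)) := by ring
    have := ball_avg hD hP hu hK hug hgG hm0 hm (z := x) hrk hrk' hCd
      (ball_subset_ball (by linarith)) (by rw [e]; exact hD.two x hrk')
    refine this.trans (le_of_eq ?_)
    rw [hDdef]; ring
  have hind : ∀ n, |a n - a 0| ≤ D * (2 - 2 * (1 / 2) ^ n) := by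
    intro n
    induction n with
    | zero => simp
    | succ n ih =>
      have := abs_sub_le (a (n + 1)) (a n) (a 0)
      have h2 := hstep n
      rw [pow_succ]
      nlinarith
  refine le_of_forall_pos_le_add fun δ hδ => ?_
  obtain ⟨ρ, hρ, hρ'⟩ := Metric.continuous_iff.1 hu x δ hδ
  obtain ⟨k, hk⟩ := exists_pow_lt_of_lt_one (show 0 < ρ / r by positivity)
    (show (1 / 2 : ℝ) < 1 by norm_num)
  rw [lt_div_iff₀ hr] at hk
  have hrk : 0 < r * (1 / 2) ^ k := by positivity
  have hkt := (hD.lt_top x (r * (1 / 2) ^ k)).ne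
  have hk0 := (hD.pos x hrk).ne'
  have hkr : 0 < μ.real (ball x (r * (1 / 2) ^ k)) := ENNReal.toReal_pos hk0 hkt
  have h1 : |a k - u x| ≤ δ := by
    refine (avg_sub_le hk0 hkt (bdd_intOn hkt hu hK) (u x)).trans ?_
    rw [inv_mul_le_iff₀ hkr]
    have : ∫ y in ball x (r * (1 / 2) ^ k), |u y - u x| ∂μ ≤
        ∫ y in ball x (r * (1 / 2) ^ k), δ ∂μ := by
      refine setIntegral_mono_on ((bdd_intOn hkt hu hK).sub (integrableOn_const hkt)).abs
        (integrableOn_const hkt) measurableSet_ball fun y hy => ?_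
      refine (hρ' y ?_).le
      rw [mem_ball] at hy
      linarith
    simpa using this
  have h2 := hind k
  have h3 : (0 : ℝ) ≤ (1 / 2) ^ k := by positivity
  have h4 := abs_sub_le (u x) (a k) (a 0)
  rw [abs_sub_comm (u x) (a k)] at h4
  have h5 : a 0 = ⨍ y in ball x r, u y ∂μ := by simp [ha]
  rw [← h5]
  nlinarith

lemma two_point {μ : Measure X} {Cd CP lam : ℝ} (hD : Doubling μ Cd) (hP : Poincare μ CP lam)
    {u : X → ℝ} {g G : X → ℝ≥0∞} (hu : Continuous u) {K : ℝ} (hK : ∀ x, |u x| ≤ K)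
    (hug : IsUpperGradient u g) (hgG : ∀ x, g x ≤ G x) {x y : X} {m : ℝ} (hm0 : 0 ≤ m)
    (hx : MF μ G x ≤ ENNReal.ofReal m) (hy : MF μ G y ≤ ENNReal.ofReal m) :
    |u x - u y| ≤ (6 * Cd * CP + 2 * Cd ^ 2 * CP) * m * dist x y := by
  rcases eq_or_ne x y with rfl | hne
  · simp
  have hr : 0 < dist x y := dist_pos.2 hne
  set r := dist x y with hrdef
  have h1 := tele hD hP hu hK hug hgG hm0 hx (show 0 < 2 * r by positivity)
  have h2 := tele hD hP hu hK hug hgG hm0 hy hr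
  have h3 := ball_avg hD hP hu hK hug hgG hm0 hx (z := y) (c := Cd ^ 2)
    (show 0 < 2 * r by positivity) hr (by positivity)
    (ball_subset_ball' (by rw [dist_comm]; linarith)) (by
      rw [ENNReal.ofReal_pow (by linarith [hD.1])]
      refine le_trans (measure_mono ?_) (hD.pow y hr 2)
      exact ball_subset_ball' (by linarith))
  rw [abs_le] at *
  constructor <;> nlinarith


lemma exists_curve [ProperSpace X] {G : X → ℝ≥0∞} (hG : LowerSemicontinuous G)
    (hG1 : ∀ x, 1 ≤ G x) {x y : X} {c : ℝ≥0∞} (hc : c ≠ ∞) (S : ℕ → ℝ) (f : ℕ → ℝ → X)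
    (hEC : ∀ n : ℕ, EC (1 / ((n : ℝ) + 1)) x y (S n) (f n))
    (hcost : ∀ n : ℕ, ∫⁻ t in Ico 0 (S n), min (G (f n t)) ((n : ℝ≥0∞) + 1) ≤ c) :
    ∃ γ : Curve X, γ.toFun 0 = x ∧ γ.toFun γ.len = y ∧ γ.integral G ≤ c := by
  have hGm : Measurable G := hG.measurable
  have hSle : ∀ n, S n ≤ c.toReal := by
    intro n
    have h1 : ENNReal.ofReal (S n) ≤ c := by
      refine le_trans ?_ (hcost n)
      calc ENNReal.ofReal (S n) = ∫⁻ t in Ico 0 (S n), 1 := by simp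
        _ ≤ _ := lintegral_mono fun t => le_min (hG1 _) (by simp)
    exact (ENNReal.ofReal_le_iff_le_toReal hc).1 h1
  have hε1 : ∀ n : ℕ, 1 / ((n : ℝ) + 1) ≤ 1 := by
    intro n
    rw [div_le_one (by positivity)]
    linarith [(Nat.cast_nonneg n : (0 : ℝ) ≤ n)]
  have hcpt : IsCompact ((Set.pi univ fun q : ℚ => closedBall x (|(q : ℝ)| + 1)) ×ˢ
      Icc 0 c.toReal) :=
    (isCompact_univ_pi fun q => isCompact_closedBall _ _).prod isCompact_Icc
  obtain ⟨⟨F, s⟩, hFs, φ, hφ, hlim⟩ := hcpt.tendsto_subseq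
    (x := fun n => ((fun q : ℚ => f n |(q : ℝ)|), S n)) (by
      intro n
      refine ⟨fun q _ => ?_, ⟨(hEC n).1, hSle n⟩⟩
      have := (hEC n).2.2.2.2 0 |(q : ℝ)| le_rfl (abs_nonneg _)
      rw [(hEC n).2.2.1, dist_comm] at this
      rw [mem_closedBall]
      linarith [hε1 n])
  have hlimS : Tendsto (fun n => S (φ n)) atTop (𝓝 s) := (continuous_snd.tendsto _).comp hlim
  have hlimF : ∀ q : ℚ, Tendsto (fun n => f (φ n) |(q : ℝ)|) atTop (𝓝 (F q)) := by
    intro q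
    exact (((continuous_apply q).comp continuous_fst).tendsto (F, s)).comp hlim
  have hε0 : Tendsto (fun n => 1 / ((φ n : ℝ) + 1)) atTop (𝓝 0) :=
    (tendsto_one_div_add_atTop_nhds_zero_nat (𝕜 := ℝ)).comp hφ.tendsto_atTop
  have hfd : ∀ n s t, 0 ≤ s → 0 ≤ t → dist (f n s) (f n t) ≤ |s - t| + 1 / ((n : ℝ) + 1) := by
    intro n s t hs ht
    rcases le_total s t with h | h
    · have := (hEC n).2.2.2.2 s t hs h
      rwa [abs_sub_comm, abs_of_nonneg (by linarith)]
    · have := (hEC n).2.2.2.2 t s ht h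
      rwa [dist_comm, abs_of_nonneg (by linarith)]
  have hex : ∀ t : ℝ, ∃ l, Tendsto (fun n => f (φ n) |t|) atTop (𝓝 l) := by
    intro t
    apply cauchySeq_tendsto_of_complete
    rw [Metric.cauchySeq_iff']
    intro δ hδ
    obtain ⟨q, hq1, hq2⟩ := exists_rat_btwn (show t - δ / 8 < t + δ / 8 by linarith)
    have hqt : |(|t| - |(q : ℝ)|)| ≤ δ / 8 := by
      refine (abs_abs_sub_abs_le_abs_sub t q).trans ?_
      rw [abs_le]; constructor <;> linarith
    have hqt' : |(|(q : ℝ)| - |t|)| ≤ δ / 8 := by rwa [abs_sub_comm]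
    obtain ⟨N1, hN1⟩ := Metric.cauchySeq_iff.1 (hlimF q).cauchySeq (δ / 8) (by positivity)
    obtain ⟨N2, hN2⟩ := eventually_atTop.1 (hε0.eventually_lt_const (show (0 : ℝ) < δ / 8 by positivity))
    refine ⟨max N1 N2, fun n hn => ?_⟩
    have h1 := hN1 n (le_trans (le_max_left _ _) hn) (max N1 N2) (le_max_left _ _)
    have h2 := hN2 n (le_trans (le_max_right _ _) hn)
    have h3 := hN2 (max N1 N2) (le_max_right _ _)
    have h4 := hfd (φ n) |t| |(q : ℝ)| (abs_nonneg _) (abs_nonneg _)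
    have h5 := hfd (φ (max N1 N2)) |(q : ℝ)| |t| (abs_nonneg _) (abs_nonneg _)
    have h6 := dist_triangle4 (f (φ n) |t|) (f (φ n) |(q : ℝ)|) (f (φ (max N1 N2)) |(q : ℝ)|)
      (f (φ (max N1 N2)) |t|)
    linarith
  choose l hl using hex
  have hl' : ∀ t, 0 ≤ t → Tendsto (fun n => f (φ n) t) atTop (𝓝 (l t)) := by
    intro t ht
    have := hl t
    rwa [abs_of_nonneg ht] at this
  have hs0 : 0 ≤ s := ge_of_tendsto' hlimS fun n => (hEC _).1
  have hlip : LipschitzOnWith 1 l (Icc 0 s) := by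
    refine LipschitzOnWith.of_dist_le_mul fun a ha b hb => ?_
    have h1 : Tendsto (fun n => dist (f (φ n) a) (f (φ n) b)) atTop (𝓝 (dist (l a) (l b))) :=
      (hl' a ha.1).dist (hl' b hb.1)
    have h2 : Tendsto (fun n => |a - b| + 1 / ((φ n : ℝ) + 1)) atTop (𝓝 (|a - b| + 0)) :=
      tendsto_const_nhds.add hε0
    have := le_of_tendsto_of_tendsto' h1 h2 fun n => hfd (φ n) a b ha.1 hb.1
    simpa [Real.dist_eq] using this
  refine ⟨⟨s, hs0, l, hlip⟩, ?_, ?_, ?_⟩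
  · refine tendsto_nhds_unique (hl' 0 le_rfl) ?_
    simp only [(hEC _).2.2.1]
    exact tendsto_const_nhds
  · refine tendsto_nhds_unique (hl' s hs0) ?_
    rw [tendsto_iff_dist_tendsto_zero]
    have h2 : Tendsto (fun n => |s - S (φ n)| + 1 / ((φ n : ℝ) + 1)) atTop (𝓝 (|s - s| + 0)) :=
      ((tendsto_const_nhds.sub hlimS).abs).add hε0
    simp only [sub_self, abs_zero, add_zero] at h2
    refine squeeze_zero (fun _ => dist_nonneg) (fun n => ?_) h2
    have := hfd (φ n) s (S (φ n)) hs0 (hEC _).1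
    rwa [(hEC (φ n)).2.2.2.1 _ le_rfl] at this
  · have e : Curve.integral ⟨s, hs0, l, hlip⟩ G = ∫⁻ t in Ico 0 s, G (l t) := by
      rw [Curve.integral]
      exact setLIntegral_congr Ico_ae_eq_Icc.symm
    rw [e]
    calc ∫⁻ t in Ico 0 s, G (l t)
        = ∫⁻ t, (Ico 0 s).indicator (fun t => G (l t)) t := (lintegral_indicator measurableSet_Ico _).symm
      _ ≤ ∫⁻ t, liminf (fun n => (Ico 0 (S (φ n))).indicator
            (fun t => min (G (f (φ n) t)) ((φ n : ℝ≥0∞) + 1)) t) atTop := by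
          refine lintegral_mono fun t => ?_
          by_cases ht : t ∈ Ico 0 s
          · rw [indicator_of_mem ht]
            refine le_of_forall_lt fun b hb => ?_
            obtain ⟨b', hb1, hb2⟩ := exists_between hb
            refine hb1.trans_le ?_
            refine le_liminf_of_le (by isBoundedDefault) ?_
            have e1 := (hl' t ht.1).eventually (hG (l t) b' hb2)
            have e2 := hlimS.eventually_const_lt ht.2
            have hb't : b' ≠ ∞ := (hb2.trans_le le_top).ne
            obtain ⟨N, hN⟩ := ENNReal.exists_nat_gt hb't
            filter_upwards [e1, e2, eventually_ge_atTop N] with n h1 h2 h3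
            rw [indicator_of_mem (show t ∈ Ico 0 (S (φ n)) from ⟨ht.1, h2⟩)]
            refine le_min h1.le (hN.le.trans ?_)
            have : (N : ℝ≥0∞) ≤ φ n := by exact_mod_cast h3.trans (hφ.id_le n)
            exact this.trans le_self_add
          · rw [indicator_of_notMem ht]; exact zero_le
      _ ≤ liminf (fun n => ∫⁻ t, (Ico 0 (S (φ n))).indicator
            (fun t => min (G (f (φ n) t)) ((φ n : ℝ≥0∞) + 1)) t) atTop := by
          refine lintegral_liminf_le fun n => ?_
          refine Measurable.indicator ?_ measurableSet_Ico
          exact (hGm.comp (hEC _).2.1).min measurable_const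
      _ ≤ c := by
          refine liminf_le_of_frequently_le' (Frequently.of_forall fun n => ?_)
          rw [lintegral_indicator measurableSet_Ico]
          exact hcost _

lemma lip_est [CompleteSpace X] {μ : Measure X} {Cd CP lam : ℝ} (hD : Doubling μ Cd)
    (hP : Poincare μ CP lam) {G : X → ℝ≥0∞} (hG : LowerSemicontinuous G)
    (hG1 : ∀ x, 1 ≤ G x) {u : X → ℝ} (hu : IsUpperGradient u G) {x y : X} {m : ℝ} (hm0 : 0 ≤ m)
    (hx : MF μ G x ≤ ENNReal.ofReal m) (hy : MF μ G y ≤ ENNReal.ofReal m) :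
    |u x - u y| ≤ (6 * Cd * CP + 2 * Cd ^ 2 * CP) * m * dist x y := by
  have := hD.proper
  have hCd : 0 ≤ Cd := by linarith [hD.1]
  have hCP : 0 ≤ CP := by linarith [hP.1]
  set K0 := (6 * Cd * CP + 2 * Cd ^ 2 * CP) * m * dist x y with hK0
  have hK00 : 0 ≤ K0 := by positivity
  refine le_of_forall_pos_le_add fun δ hδ => ?_
  have key : ∀ n : ℕ, ∃ (S : ℝ) (f : ℝ → X), EC (1 / ((n : ℝ) + 1)) x y S f ∧
      ∫⁻ t in Ico 0 S, min (G (f t)) ((n : ℝ≥0∞) + 1) ≤ ENNReal.ofReal (K0 + δ) := by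
    intro n
    set g : X → ℝ≥0∞ := fun z => min (G z) ((n : ℝ≥0∞) + 1) with hg
    have hgm : Measurable g := hG.measurable.min measurable_const
    have hε : 0 < 1 / ((n : ℝ) + 1) := by positivity
    have hK : 0 ≤ K0 + δ := by positivity
    have h1 := two_point hD hP (u := uE g (1 / ((n : ℝ) + 1)) (K0 + δ) x) (g := g) (G := G)
      (uE_cont hgm hε hK x (N := (n : ℝ≥0) + 1) (fun z => by
        rw [hg]; push_cast; exact min_le_right _ _)) (K := K0 + δ)
      (fun z => by rw [abs_of_nonneg (uE_nonneg _ _ _ _ _)]; exact uE_le _ _ hK _ _)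
      (uE_ug hgm hε.le hK x) (fun z => min_le_left _ _) hm0 hx hy
    rw [uE_self _ hε.le, zero_sub, abs_neg, abs_of_nonneg (uE_nonneg _ _ _ _ _), ← hK0] at h1
    have h2 : hE g (1 / ((n : ℝ) + 1)) x y < ENNReal.ofReal (K0 + δ) := by
      by_contra hcon
      rw [not_lt] at hcon
      rw [uE, min_eq_right hcon, ENNReal.toReal_ofReal hK] at h1
      linarith
    rw [hE] at h2
    simp only [iInf_lt_iff] at h2
    obtain ⟨S, f, hf, hlt⟩ := h2
    exact ⟨S, f, hf, hlt.le⟩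
  choose S f hEC hcost using key
  obtain ⟨γ, h0, h1, h2⟩ := exists_curve hG hG1 ENNReal.ofReal_ne_top S f hEC hcost
  have := (hu.2 γ)
  rw [UGIneq, h0, h1] at this
  exact (ENNReal.ofReal_le_ofReal_iff (by positivity)).1 (this.trans h2)

lemma ug_aemeasurable [CompleteSpace X] {μ : Measure X} {Cd CP lam : ℝ} (hD : Doubling μ Cd)
    (hP : Poincare μ CP lam) {g : X → ℝ≥0∞} {u : X → ℝ} (hu : IsUpperGradient u g)
    (hfin : ∫⁻ x, g x ∂μ ≠ ∞) : AEMeasurable u μ := by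
  have := hD.proper
  have := hD.locFin
  have hCd : 0 ≤ Cd := by linarith [hD.1]
  have hCP : 0 ≤ CP := by linarith [hP.1]
  obtain ⟨G0, hG0, hlsc, hG0i⟩ := exists_le_lowerSemicontinuous_lintegral_ge μ g hu.1
    (one_ne_zero (α := ℝ≥0∞))
  have hG0fin : ∫⁻ x, G0 x ∂μ ≠ ∞ :=
    (hG0i.trans_lt (ENNReal.add_lt_top.2 ⟨hfin.lt_top, ENNReal.one_lt_top⟩)).ne
  set G : X → ℝ≥0∞ := fun x => G0 x + 1 with hGdef
  have hGl : LowerSemicontinuous G := hlsc.add lowerSemicontinuous_const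
  have hae := MF_ae_lt_top hD hlsc.measurable hG0fin
  have huG : IsUpperGradient u G := by
    refine ⟨hGl.measurable, fun γ => (hu.2 γ).trans ?_⟩
    exact lintegral_mono fun t => (hG0 _).trans le_self_add
  set C : ℝ := 6 * Cd * CP + 2 * Cd ^ 2 * CP with hC
  have hC0 : 0 ≤ C := by positivity
  have hext : ∀ n : ℕ, ∃ v : X → ℝ, Continuous v ∧
      ∀ x, MF μ G x ≤ ENNReal.ofReal n → u x = v x := by
    intro n
    have hL : LipschitzOnWith (C * n).toNNReal u {x | MF μ G x ≤ ENNReal.ofReal n} := by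
      refine LipschitzOnWith.of_dist_le_mul fun x hx y hy => ?_
      rw [Real.dist_eq, Real.coe_toNNReal _ (by positivity)]
      exact lip_est hD hP hGl (fun x => by simp [hGdef]) huG (Nat.cast_nonneg n) hx hy
    obtain ⟨v, hv, hv2⟩ := hL.extend_real
    exact ⟨v, hv.continuous, fun x hx => hv2 hx⟩
  choose v hv hv2 using hext
  refine aemeasurable_of_tendsto_metrizable_ae atTop (f := v)
    (fun n => (hv n).measurable.aemeasurable) ?_
  filter_upwards [hae] with x hx
  obtain ⟨N, hN⟩ := ENNReal.exists_nat_gt hx.ne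
  refine tendsto_const_nhds.congr' ?_
  filter_upwards [eventually_ge_atTop N] with n hn
  refine hv2 n x ?_
  rw [ENNReal.ofReal_natCast]
  exact hN.le.trans (by exact_mod_cast hn)


lemma weak_to_ug {μ : Measure X} {u : X → ℝ} {g : X → ℝ≥0∞}
    (h : IsWeakUpperGradientOn μ u g univ) {η : ℝ≥0∞} (hη : η ≠ 0) :
    ∃ g', IsUpperGradient u g' ∧ ∫⁻ x, g' x ∂μ ≤ ∫⁻ x, g x ∂μ + η := by
  obtain ⟨hg, ρ, hρ, hρi, hρc⟩ := h
  obtain ⟨a, ha, haη⟩ := ENNReal.exists_nnreal_pos_mul_lt hρi.ne hη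
  set N := toMeasurable μ {x | g x ≠ hg.mk g x} with hN
  have hN0 : μ N = 0 := by rw [hN, measure_toMeasurable]; exact hg.ae_eq_mk
  set g1 : X → ℝ≥0∞ := fun x => hg.mk g x + N.indicator (fun _ => ∞) x with hg1
  have hg1m : Measurable g1 :=
    hg.measurable_mk.add (measurable_const.indicator (measurableSet_toMeasurable _ _))
  have hle : ∀ x, g x ≤ g1 x := by
    intro x
    by_cases hx : x ∈ N
    · simp [hg1, hx]
    · have : g x = hg.mk g x := by
        by_contra hcon
        exact hx (subset_toMeasurable _ _ hcon)
      rw [hg1, this]; exact le_self_add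
  have hi : ∫⁻ x, g1 x ∂μ = ∫⁻ x, g x ∂μ := by
    refine lintegral_congr_ae ?_
    have : ∀ᵐ x ∂μ, x ∉ N := measure_eq_zero_iff_ae_notMem.1 hN0
    filter_upwards [hg.ae_eq_mk, this] with x hx hxN
    simp [hg1, hxN, hx]
  refine ⟨fun x => g1 x + a * ρ x, ⟨hg1m.add (hρ.const_mul _), fun γ => ?_⟩, ?_⟩
  · by_cases hγ : UGIneq u g γ
    · exact hγ.trans (lintegral_mono fun t => (hle _).trans le_self_add)
    · have h1 := hρc γ ⟨fun t _ => mem_univ _, hγ⟩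
      have h2 : γ.integral (fun x => g1 x + a * ρ x) = ∞ := by
        rw [eq_top_iff]
        calc (∞ : ℝ≥0∞) = a * γ.integral ρ := by
              rw [h1, ENNReal.mul_top]; exact_mod_cast ha.ne'
          _ ≤ ∫⁻ t in Icc (0 : ℝ) γ.len, a * ρ (γ.toFun t) := lintegral_const_mul_le _ _
          _ ≤ _ := lintegral_mono fun t => le_add_self
      rw [UGIneq, h2]; exact le_top
  · rw [lintegral_add_left hg1m, lintegral_const_mul _ hρ, hi]
    gcongr

lemma ug_weak {μ : Measure X} {u : X → ℝ} {g : X → ℝ≥0∞} (h : IsUpperGradient u g) :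
    IsWeakUpperGradientOn μ u g univ :=
  ⟨h.1.aemeasurable, fun _ => 0, measurable_const, by simp, fun γ hγ => absurd (h.2 γ) hγ.2⟩

lemma NNorm_le {μ : Measure X} {u : X → ℝ} {g : X → ℝ≥0∞} (h : IsUpperGradient u g) :
    NNorm μ univ u ≤ ∫⁻ x, ENNReal.ofReal |u x| ∂μ + ∫⁻ x, g x ∂μ := by
  rw [NNorm, Measure.restrict_univ]
  gcongr
  exact iInf₂_le g (ug_weak h)

lemma capa1_le {μ : Measure X} {A : Set X} {u : X → ℝ} {g : X → ℝ≥0∞} (h : IsUpperGradient u g)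
    (hA : ∀ x ∈ A, 1 ≤ u x) :
    capa1 μ A ≤ ∫⁻ x, ENNReal.ofReal |u x| ∂μ + ∫⁻ x, g x ∂μ := by
  rcases eq_or_ne (∫⁻ x, ENNReal.ofReal |u x| ∂μ + ∫⁻ x, g x ∂μ) ∞ with h1 | h1
  · rw [h1]; exact le_top
  · have h2 := NNorm_le (μ := μ) h
    refine le_trans ?_ h2
    unfold capa1
    refine iInf_le_of_le u ?_
    refine iInf_le_of_le (h2.trans_lt h1.lt_top) ?_
    exact iInf_le _ hA

lemma capa1_good {μ : Measure X} {A : Set X} {c : ℝ≥0∞} (h : capa1 μ A < c) :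
    ∃ (v : X → ℝ) (g : X → ℝ≥0∞), IsUpperGradient v g ∧ (∀ x, 0 ≤ v x) ∧ (∀ x, v x ≤ 1) ∧
      (∀ x ∈ A, v x = 1) ∧ ∫⁻ x, ENNReal.ofReal (v x) ∂μ + ∫⁻ x, g x ∂μ ≤ c := by
  simp only [capa1, iInf_lt_iff] at h
  obtain ⟨u, -, hA, hlt⟩ := h
  rw [NNorm, Measure.restrict_univ] at hlt
  simp only [ENNReal.add_iInf, iInf_lt_iff] at hlt
  obtain ⟨g, hg, hlt⟩ := hlt
  obtain ⟨g', hg', hi⟩ := weak_to_ug hg (tsub_pos_of_lt hlt).ne'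
  refine ⟨fun x => max 0 (min (u x) 1), g', ⟨hg'.1, fun γ => ?_⟩, fun x => le_max_left _ _,
    fun x => max_le zero_le_one (min_le_right _ _), fun x hx => by simp [hA x hx], ?_⟩
  · refine le_trans (ENNReal.ofReal_le_ofReal ?_) (hg'.2 γ)
    have key : ∀ a b : ℝ, |max 0 (min a 1) - max 0 (min b 1)| ≤ |a - b| := by
      intro a b
      have h1 := abs_max_sub_max_le_max 0 (min a 1) 0 (min b 1)
      have h2 := abs_min_sub_min_le_max a 1 b 1
      rw [sub_self, abs_zero, max_eq_right (abs_nonneg (min a 1 - min b 1))] at h1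
      rw [sub_self, abs_zero, max_eq_left (abs_nonneg (a - b))] at h2
      exact h1.trans h2
    exact key _ _
  · calc _ ≤ ∫⁻ x, ENNReal.ofReal |u x| ∂μ + (∫⁻ x, g x ∂μ +
            (c - (∫⁻ x, ENNReal.ofReal |u x| ∂μ + ∫⁻ x, g x ∂μ))) := by
          refine add_le_add (lintegral_mono fun x => ENNReal.ofReal_le_ofReal ?_) hi
          exact max_le (abs_nonneg _) ((min_le_left _ _).trans (le_abs_self _))
      _ = c := by rw [← add_assoc, add_tsub_cancel_of_le hlt.le]

lemma capa1_mono {μ : Measure X} {A B : Set X} (h : A ⊆ B) : capa1 μ A ≤ capa1 μ B := by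
  refine iInf_mono fun u => iInf_mono fun _ => ?_
  exact le_iInf fun hB => iInf_le _ fun x hx => hB x (h hx)

lemma capa1_empty {μ : Measure X} : capa1 μ (∅ : Set X) = 0 := by
  have : IsUpperGradient (fun _ : X => (0 : ℝ)) (fun _ => 0) :=
    ⟨measurable_const, fun γ => by simp [UGIneq]⟩
  refine le_antisymm ((capa1_le this (by simp)).trans ?_) zero_le
  simp

lemma capa1_iUnion [CompleteSpace X] {μ : Measure X} {Cd CP lam : ℝ} (hD : Doubling μ Cd)
    (hP : Poincare μ CP lam) {ι : Type} [Countable ι] [Nonempty ι] (A : ι → Set X) :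
    capa1 μ (⋃ i, A i) ≤ ∑' i, capa1 μ (A i) := by
  rcases eq_or_ne (∑' i, capa1 μ (A i)) ∞ with h | h
  · rw [h]; exact le_top
  refine ENNReal.le_of_forall_pos_le_add fun δ hδ _ => ?_
  obtain ⟨η, hη, hηs⟩ := ENNReal.exists_pos_sum_of_countable' (ε := δ) (by exact_mod_cast hδ.ne') ι
  have hlt : ∀ i, capa1 μ (A i) < capa1 μ (A i) + η i := fun i =>
    ENNReal.lt_add_right (ENNReal.ne_top_of_tsum_ne_top h i) (hη i).ne'
  choose v g hug h0 h1 hA hle using fun i => capa1_good (hlt i)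
  have hsum : ∑' i, (capa1 μ (A i) + η i) ≤ ∑' i, capa1 μ (A i) + δ := by
    rw [ENNReal.tsum_add]; gcongr
  have hfin : ∑' i, (capa1 μ (A i) + η i) ≠ ∞ :=
    (hsum.trans_lt (ENNReal.add_lt_top.2 ⟨h.lt_top, ENNReal.coe_lt_top⟩)).ne
  have hgfin : ∀ i, ∫⁻ x, g i x ∂μ ≠ ∞ := fun i =>
    ((le_add_self.trans (hle i)).trans_lt (ENNReal.ne_top_of_tsum_ne_top hfin i).lt_top).ne
  have hvm : ∀ i, AEMeasurable (v i) μ := fun i => ug_aemeasurable hD hP (hug i) (hgfin i)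
  have hbdd : ∀ x, BddAbove (range fun i => v i x) := fun x =>
    ⟨1, by rintro _ ⟨i, rfl⟩; exact h1 i x⟩
  have hw0 : ∀ x, 0 ≤ ⨆ i, v i x := fun x => Real.iSup_nonneg fun i => h0 i x
  have hUG : IsUpperGradient (fun x => ⨆ i, v i x) (fun x => ∑' i, g i x) := by
    refine ⟨Measurable.ennreal_tsum fun i => (hug i).1, fun γ => ?_⟩
    rw [UGIneq]
    rcases eq_or_ne (γ.integral fun x => ∑' i, g i x) ∞ with ht | ht
    · rw [ht]; exact le_top
    have key : ∀ i, |v i (γ.toFun 0) - v i (γ.toFun γ.len)| ≤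
        (γ.integral fun x => ∑' i, g i x).toReal := by
      intro i
      rw [← ENNReal.ofReal_le_iff_le_toReal ht]
      exact ((hug i).2 γ).trans (lintegral_mono fun t => ENNReal.le_tsum i)
    rw [ENNReal.ofReal_le_iff_le_toReal ht, abs_sub_le_iff]
    constructor
    · rw [sub_le_iff_le_add]
      refine ciSup_le fun i => ?_
      have := (abs_sub_le_iff.1 (key i)).1
      have h2 := le_ciSup (hbdd (γ.toFun γ.len)) i
      linarith
    · rw [sub_le_iff_le_add]
      refine ciSup_le fun i => ?_
      have := (abs_sub_le_iff.1 (key i)).2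
      have h2 := le_ciSup (hbdd (γ.toFun 0)) i
      linarith
  refine (capa1_le hUG ?_).trans ?_
  · intro x hx
    obtain ⟨i, hi⟩ := mem_iUnion.1 hx
    rw [← hA i x hi]
    exact le_ciSup (hbdd x) i
  · calc _ ≤ ∫⁻ x, ∑' i, ENNReal.ofReal (v i x) ∂μ + ∫⁻ x, ∑' i, g i x ∂μ := by
          gcongr with x
          rw [abs_of_nonneg (hw0 x)]
          rcases eq_or_ne (∑' i, ENNReal.ofReal (v i x)) ∞ with ht | ht
          · rw [ht]; exact le_top
          rw [ENNReal.ofReal_le_iff_le_toReal ht]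
          refine ciSup_le fun i => ?_
          rw [← ENNReal.ofReal_le_iff_le_toReal ht]
          exact ENNReal.le_tsum i
      _ = ∑' i, (∫⁻ x, ENNReal.ofReal (v i x) ∂μ + ∫⁻ x, g i x ∂μ) := by
          rw [lintegral_tsum fun i => (hvm i).ennreal_ofReal,
            lintegral_tsum fun i => (hug i).1.aemeasurable, ENNReal.tsum_add]
      _ ≤ ∑' i, (capa1 μ (A i) + η i) := ENNReal.tsum_le_tsum hle
      _ ≤ _ := hsum

lemma capa1_union [CompleteSpace X] {μ : Measure X} {Cd CP lam : ℝ} (hD : Doubling μ Cd)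
    (hP : Poincare μ CP lam) (A B : Set X) :
    capa1 μ (A ∪ B) ≤ capa1 μ A + capa1 μ B := by
  rw [union_eq_iUnion]
  refine (capa1_iUnion hD hP _).trans ?_
  rw [tsum_bool, add_comm]
  simp

theorem main_aux
    (μ : Measure X) (hcomp : CompleteSpace X)
    (hdoub : ∃ Cd : ℝ, Doubling μ Cd) (hpoin : ∃ CP lam : ℝ, Poincare μ CP lam)
    (Ω : Set X) :
    (∀ A : Set X, A ⊆ Ω → capa1 μ (symmDiff A A) = 0) ∧
    (∀ A B : Set X, A ⊆ Ω → B ⊆ Ω → capa1 μ (symmDiff A B) = capa1 μ (symmDiff B A)) ∧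
    (∀ A B C : Set X, A ⊆ Ω → B ⊆ Ω → C ⊆ Ω →
      capa1 μ (symmDiff A C) ≤ capa1 μ (symmDiff A B) + capa1 μ (symmDiff B C)) ∧
    (∀ A B : Set X, A ⊆ Ω → B ⊆ Ω → capa1 μ A < ∞ → capa1 μ B < ∞ →
      capa1 μ (symmDiff A B) < ∞) ∧
    (∀ A : ℕ → Set X, (∀ i, A i ⊆ Ω) → (∀ i, capa1 μ (A i) < ∞) →
      (∀ ε : ℝ, 0 < ε → ∃ N : ℕ, ∀ m ≥ N, ∀ n ≥ N,
        capa1 μ (symmDiff (A m) (A n)) < ENNReal.ofReal ε) →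
      ∃ B : Set X, B ⊆ Ω ∧ capa1 μ B < ∞ ∧
        Filter.Tendsto (fun i => capa1 μ (symmDiff (A i) B)) Filter.atTop (𝓝 0)) := by
  obtain ⟨Cd, hD⟩ := hdoub
  obtain ⟨CP, lam, hP⟩ := hpoin
  have htri : ∀ A B C : Set X,
      capa1 μ (symmDiff A C) ≤ capa1 μ (symmDiff A B) + capa1 μ (symmDiff B C) := fun A B C =>
    (capa1_mono (symmDiff_triangle A B C)).trans (capa1_union hD hP _ _)
  refine ⟨fun A _ => ?_, fun A B _ _ => ?_, fun A B C _ _ _ => htri A B C,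
    fun A B _ _ hA hB => ?_, fun A hA hAfin hC => ?_⟩
  · rw [symmDiff_self]; exact capa1_empty
  · rw [symmDiff_comm]
  · exact (capa1_mono symmDiff_le_sup).trans_lt
      ((capa1_union hD hP A B).trans_lt (ENNReal.add_lt_top.2 ⟨hA, hB⟩))
  choose N hN using fun k : ℕ => hC ((1 / 2) ^ k) (by positivity)
  set M : ℕ → ℕ := fun k => (Finset.range (k + 1)).sup N with hM
  have hMN : ∀ k, N k ≤ M k := fun k => Finset.le_sup (f := N) (by simp)
  have hMmono : Monotone M := fun a b hab => Finset.sup_mono (by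
    intro x; simp only [Finset.mem_range]; omega)
  have hstep : ∀ k, capa1 μ (symmDiff (A (M k)) (A (M (k + 1)))) ≤ ENNReal.ofReal ((1 / 2) ^ k) :=
    fun k => (hN k _ (hMN k) _ ((hMN k).trans (hMmono (Nat.le_succ k)))).le
  set B : Set X := ⋂ k, ⋃ j, A (M (k + j)) with hB
  have hBsub : B ⊆ Ω := by
    intro x hx
    obtain ⟨j, hj⟩ := mem_iUnion.1 (mem_iInter.1 hx 0)
    exact hA _ hj
  have hsub : ∀ k, symmDiff (A (M k)) B ⊆
      ⋃ j, symmDiff (A (M (k + j))) (A (M (k + j + 1))) := by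
    intro k x hx
    by_contra hcon
    simp only [mem_iUnion, not_exists] at hcon
    have hiff : ∀ j, (x ∈ A (M (k + j)) ↔ x ∈ A (M k)) := by
      intro j
      induction j with
      | zero => simp
      | succ j ih =>
        have := hcon j
        rw [Set.mem_symmDiff] at this
        rw [← add_assoc]
        tauto
    have hxB : x ∈ B ↔ x ∈ A (M k) := by
      rw [hB, mem_iInter]
      constructor
      · intro h
        obtain ⟨j, hj⟩ := mem_iUnion.1 (h k)
        exact (hiff j).1 hj
      · intro h i
        refine mem_iUnion.2 ⟨k, ?_⟩
        rw [add_comm]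
        exact (hiff i).2 h
    rw [Set.mem_symmDiff] at hx
    tauto
  have hcap : ∀ k, capa1 μ (symmDiff (A (M k)) B) ≤ ENNReal.ofReal (2 * (1 / 2) ^ k) := by
    intro k
    refine (capa1_mono (hsub k)).trans ((capa1_iUnion hD hP _).trans ?_)
    have hs : Summable fun j : ℕ => (1 / 2 : ℝ) ^ k * (1 / 2) ^ j :=
      (summable_geometric_two).mul_left _
    calc _ ≤ ∑' j : ℕ, ENNReal.ofReal ((1 / 2) ^ k * (1 / 2) ^ j) := by
          refine ENNReal.tsum_le_tsum fun j => ?_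
          rw [← pow_add]; exact hstep (k + j)
      _ = _ := by
          rw [← ENNReal.ofReal_tsum_of_nonneg (fun j => by positivity) hs, tsum_mul_left,
            tsum_geometric_two, mul_comm]
  refine ⟨B, hBsub, ?_, ?_⟩
  · have : B ⊆ A (M 0) ∪ symmDiff (A (M 0)) B := by
      intro x hx
      by_cases h : x ∈ A (M 0)
      · exact Or.inl h
      · exact Or.inr (Set.mem_symmDiff.2 (Or.inr ⟨hx, h⟩))
    refine (capa1_mono this).trans_lt ((capa1_union hD hP _ _).trans_lt ?_)
    exact ENNReal.add_lt_top.2 ⟨hAfin _, (hcap 0).trans_lt ENNReal.ofReal_lt_top⟩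
  · have hlim : Tendsto (fun k : ℕ => ENNReal.ofReal (3 * (1 / 2) ^ k)) atTop (𝓝 0) := by
      rw [← ENNReal.ofReal_zero]
      refine ENNReal.tendsto_ofReal ?_
      rw [← mul_zero (3 : ℝ)]
      exact (tendsto_pow_atTop_nhds_zero_of_lt_one (by norm_num) (by norm_num)).const_mul _
    rw [ENNReal.tendsto_nhds_zero]
    intro ε hε
    obtain ⟨k, hk⟩ := (hlim.eventually_lt_const hε).exists
    filter_upwards [eventually_ge_atTop (M k)] with i hi
    refine le_trans ?_ hk.le
    refine (htri (A i) (A (M k)) B).trans ?_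
    calc _ ≤ ENNReal.ofReal ((1 / 2) ^ k) + ENNReal.ofReal (2 * (1 / 2) ^ k) :=
          add_le_add (hN k _ ((hMN k).trans hi) _ (hMN k)).le (hcap k)
      _ = _ := by
          rw [← ENNReal.ofReal_add (by positivity) (by positivity)]
          congr 1; ring

end Aux

/-- For an arbitrary `Ω ⊆ X`, the collection of sets `A ⊆ Ω` with
`capa₁(A) < ∞`, with distance `d(A₁,A₂) = capa₁(A₁ Δ A₂)`, is a complete metric space
once sets at distance zero are identified: the distance is finite, vanishes on the
diagonal, is symmetric, satisfies the triangle inequality, and every Cauchy sequence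
converges. -/
theorem capa_symmDiff_complete_metric
    (μ : Measure X) (hcomp : CompleteSpace X)
    (hdoub : ∃ Cd : ℝ, Doubling μ Cd) (hpoin : ∃ CP lam : ℝ, Poincare μ CP lam)
    (Ω : Set X) :
    (∀ A : Set X, A ⊆ Ω → capa1 μ (symmDiff A A) = 0) ∧
    (∀ A B : Set X, A ⊆ Ω → B ⊆ Ω → capa1 μ (symmDiff A B) = capa1 μ (symmDiff B A)) ∧
    (∀ A B C : Set X, A ⊆ Ω → B ⊆ Ω → C ⊆ Ω →
      capa1 μ (symmDiff A C) ≤ capa1 μ (symmDiff A B) + capa1 μ (symmDiff B C)) ∧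
    (∀ A B : Set X, A ⊆ Ω → B ⊆ Ω → capa1 μ A < ∞ → capa1 μ B < ∞ →
      capa1 μ (symmDiff A B) < ∞) ∧
    (∀ A : ℕ → Set X, (∀ i, A i ⊆ Ω) → (∀ i, capa1 μ (A i) < ∞) →
      (∀ ε : ℝ, 0 < ε → ∃ N : ℕ, ∀ m ≥ N, ∀ n ≥ N,
        capa1 μ (symmDiff (A m) (A n)) < ENNReal.ofReal ε) →
      ∃ B : Set X, B ⊆ Ω ∧ capa1 μ B < ∞ ∧
        Filter.Tendsto (fun i => capa1 μ (symmDiff (A i) B)) Filter.atTop (𝓝 0)) := by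
  exact main_aux μ hcomp hdoub hpoin Ω

end PaperBV
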